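/- Let p ∈ C[x] be nonzero and let P = Σ_{j=0}^{s} (P_j·)∘D^j with P_j ∈ C[x], P_s ≠ 0, and deg P_s < deg p. Let Q_0 = Σ_{i=0}^{e} (q_i·)∘D^i with q_i ∈ C[x], and let Q_1 = Σ_{i=0}^{e'} (t_i·)∘D^i with t_i ∈ C[x] and deg t_i ≤ deg p − deg P_s − 1 for all i. If Q_0 + Q_1 ∘ ((1/p)·) ∘ P = 0 as a C-linear endomorphism of C(x), then q_i = 0 for all i and t_i = 0 for all i. -/

import Mathlib

noncomputable section

/-- `C(x)`, the fraction field of `C[x]`. -/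
abbrev K1 (C : Type*) [Field C] := FractionRing (Polynomial C)

/-- The canonical embedding `C[x] → C(x)`. -/
def embK1 {C : Type*} [Field C] (f : Polynomial C) : K1 C :=
  algebraMap (Polynomial C) (K1 C) f

/-- Multiplication by `q ∈ C(x)` as a `C`-linear endomorphism of `C(x)`. -/
def mulK1 {C : Type*} [Field C] (q : K1 C) : Module.End C (K1 C) :=
  LinearMap.mulLeft C q

/-- The operator `Σ_{i=0}^{n} (q_i ·) ∘ D^i` as a `C`-linear endomorphism of `C(x)`. -/
def opK1 {C : Type*} [Field C] (D : Module.End C (K1 C)) (q : ℕ → K1 C) (n : ℕ) :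
    Module.End C (K1 C) :=
  ∑ i ∈ Finset.range (n + 1), mulK1 (q i) ∘ₗ (D ^ i)

theorem embK1_injective {C : Type*} [Field C] : Function.Injective (embK1 (C := C)) :=
  FaithfulSMul.algebraMap_injective (Polynomial C) (K1 C)

theorem pow_apply_embK1 {C : Type*} [Field C] (D : Module.End C (K1 C))
    (hDext : ∀ f : Polynomial C, D (embK1 f) = embK1 (Polynomial.derivative f))
    (i : ℕ) (f : Polynomial C) :
    (D ^ i) (embK1 f) = embK1 (Polynomial.derivative^[i] f) := by
  induction i with
  | zero => simp
  | succ i ih => rw [pow_succ', Module.End.mul_apply, ih, hDext, Function.iterate_succ_apply']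

theorem linearIndependent_pow_derivation {C : Type*} [Field C] [CharZero C]
    (D : Module.End C (K1 C))
    (hDext : ∀ f : Polynomial C, D (embK1 f) = embK1 (Polynomial.derivative f)) :
    LinearIndependent (K1 C) (fun i : ℕ => D ^ i) := by
  rw [linearIndependent_iff']
  intro u g hg i
  induction i using Nat.strong_induction_on with
  | _ i ih =>
    intro hi
    have h := LinearMap.congr_fun hg (embK1 (Polynomial.X ^ i))
    simp only [LinearMap.sum_apply, LinearMap.smul_apply, smul_eq_mul, LinearMap.zero_apply,
      pow_apply_embK1 D hDext] at h
    rw [Finset.sum_eq_single_of_mem i hi] at h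
    · refine (mul_eq_zero.mp h).resolve_right ?_
      have hne : Polynomial.derivative^[i] (Polynomial.X ^ i : Polynomial C) ≠ 0 := by
        rw [Polynomial.iterate_derivative_X_pow_eq_smul, Nat.descFactorial_self]
        simp [Nat.factorial_ne_zero]
      exact fun h0 => hne (embK1_injective (h0.trans (map_zero _).symm))
    · intro j hj hji
      rcases lt_or_gt_of_ne hji with h1 | h1
      · rw [ih j h1 hj, zero_mul]
      · rw [Polynomial.iterate_derivative_eq_zero
          (lt_of_le_of_lt (Polynomial.natDegree_X_pow_le i) h1)]
        simp [embK1]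

/-- The operators of order less than `n`, as a left `C(x)`-subspace. -/
def operatorsOfOrderLT {C : Type*} [Field C] (D : Module.End C (K1 C)) (n : ℕ) :
    Submodule (K1 C) (Module.End C (K1 C)) :=
  Submodule.span (K1 C) ((fun i : ℕ => D ^ i) '' Set.Iio n)

theorem operatorsOfOrderLT_mono {C : Type*} [Field C] (D : Module.End C (K1 C)) :
    Monotone (operatorsOfOrderLT D) := fun _ _ h =>
  Submodule.span_mono (Set.image_mono (Set.Iio_subset_Iio h))

theorem pow_mem_operatorsOfOrderLT {C : Type*} [Field C] (D : Module.End C (K1 C))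
    {i n : ℕ} (h : i < n) : D ^ i ∈ operatorsOfOrderLT D n :=
  Submodule.subset_span ⟨i, h, rfl⟩

theorem derivation_mul_smul {C : Type*} [Field C] {D : Module.End C (K1 C)}
    (hLeib : ∀ a b : K1 C, D (a * b) = a * D b + D a * b)
    (c : K1 C) (A : Module.End C (K1 C)) : D * (c • A) = c • (D * A) + D c • A := by
  ext z
  simp [hLeib]

theorem derivation_mul_mem_operatorsOfOrderLT {C : Type*} [Field C] {D : Module.End C (K1 C)}
    (hLeib : ∀ a b : K1 C, D (a * b) = a * D b + D a * b)
    {n : ℕ} {A : Module.End C (K1 C)} (hA : A ∈ operatorsOfOrderLT D n) :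
    D * A ∈ operatorsOfOrderLT D (n + 1) := by
  have hn := operatorsOfOrderLT_mono D n.le_succ
  induction hA using Submodule.span_induction with
  | mem A h =>
    obtain ⟨i, hi, rfl⟩ := h
    have hi' : i < n := hi
    simpa only [pow_succ'] using
      pow_mem_operatorsOfOrderLT D (show i + 1 < n + 1 by omega)
  | zero => simp
  | add A B _ _ hA hB => rw [mul_add]; exact add_mem hA hB
  | smul c A hA' hA =>
    rw [derivation_mul_smul hLeib]
    exact add_mem (Submodule.smul_mem _ _ hA) (Submodule.smul_mem _ _ (hn hA'))

theorem pow_mul_sub_mem_operatorsOfOrderLT {C : Type*} [Field C] {D : Module.End C (K1 C)}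
    (hLeib : ∀ a b : K1 C, D (a * b) = a * D b + D a * b)
    {n : ℕ} {c : K1 C} {A : Module.End C (K1 C)}
    (hA : A - c • D ^ n ∈ operatorsOfOrderLT D n) (i : ℕ) :
    D ^ i * A - c • D ^ (n + i) ∈ operatorsOfOrderLT D (n + i) := by
  induction i with
  | zero => simpa using hA
  | succ i ih =>
    have h := add_mem (derivation_mul_mem_operatorsOfOrderLT hLeib ih)
      (Submodule.smul_mem _ (D c) (pow_mem_operatorsOfOrderLT D (n + i).lt_succ_self))
    rw [mul_sub, derivation_mul_smul hLeib, ← mul_assoc, ← pow_succ', ← pow_succ'] at h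
    convert h using 1
    rw [← add_assoc]
    abel

theorem opK1_eq_sum_smul {C : Type*} [Field C] (D : Module.End C (K1 C)) (q : ℕ → K1 C) (n : ℕ) :
    opK1 D q n = ∑ i ∈ Finset.range (n + 1), q i • D ^ i := rfl

theorem opK1_sub_mem_operatorsOfOrderLT {C : Type*} [Field C] (D : Module.End C (K1 C))
    (q : ℕ → K1 C) (n : ℕ) : opK1 D q n - q n • D ^ n ∈ operatorsOfOrderLT D n := by
  rw [opK1_eq_sum_smul, Finset.sum_range_succ, add_sub_cancel_right]
  exact Submodule.sum_mem _ fun i hi =>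
    Submodule.smul_mem _ _ (pow_mem_operatorsOfOrderLT D (Finset.mem_range.mp hi))

/-- The coefficient of `D ^ N` extends to a linear functional on all endomorphisms. -/
theorem exists_coeff_functional {C : Type*} [Field C] [CharZero C] (D : Module.End C (K1 C))
    (hDext : ∀ f : Polynomial C, D (embK1 f) = embK1 (Polynomial.derivative f)) (N : ℕ) :
    ∃ φ : Module.End C (K1 C) →ₗ[K1 C] K1 C, ∀ i, φ (D ^ i) = if i = N then 1 else 0 := by
  obtain ⟨ψ, hψ⟩ := LinearMap.exists_leftInverse_of_injective
    (Finsupp.linearCombination (K1 C) (fun i : ℕ => D ^ i))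
    (LinearMap.ker_eq_bot.mpr (linearIndependent_pow_derivation D hDext))
  refine ⟨Finsupp.lapply N ∘ₗ ψ, fun i => ?_⟩
  have h := LinearMap.congr_fun hψ (Finsupp.single i 1)
  simp only [LinearMap.comp_apply, Finsupp.linearCombination_single, one_smul,
    LinearMap.id_apply] at h
  simp [h, Finsupp.single_apply]

theorem map_eq_zero_of_mem_operatorsOfOrderLT {C : Type*} [Field C] {D : Module.End C (K1 C)}
    {N : ℕ} {φ : Module.End C (K1 C) →ₗ[K1 C] K1 C}
    (hφ : ∀ i, φ (D ^ i) = if i = N then 1 else 0)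
    {A : Module.End C (K1 C)} (hA : A ∈ operatorsOfOrderLT D N) : φ A = 0 := by
  have h : operatorsOfOrderLT D N ≤ LinearMap.ker φ := by
    refine Submodule.span_le.mpr ?_
    rintro _ ⟨i, hi, rfl⟩
    have hi' : i < N := hi
    simp [hφ, hi'.ne]
  exact h hA

/-- Non-degeneracy of the ansatz `Q_0 + Q_1 ∘ ((1/p)·) ∘ P`: if `deg (lc P) < deg p`,
`Q_0` has polynomial coefficients, and the coefficients of `Q_1` have degree
`≤ deg p − deg P_s − 1`, then `Q_0 + Q_1 ∘ ((1/p)·) ∘ P = 0` forces all coefficients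
of `Q_0` and `Q_1` to vanish.  Here `D` is the unique derivation of `C(x)` extending
`d/dx` on `C[x]`. -/
theorem no_cancellation_in_contraction_ansatz
    (C : Type*) [Field C] [CharZero C]
    (D : Module.End C (K1 C))
    (hLeib : ∀ a b : K1 C, D (a * b) = a * D b + D a * b)
    (hDext : ∀ f : Polynomial C, D (embK1 f) = embK1 (Polynomial.derivative f))
    (p : Polynomial C) (hp : p ≠ 0)
    (s : ℕ) (PP : ℕ → Polynomial C) (hPPs : PP s ≠ 0)
    (hdeg : (PP s).natDegree < p.natDegree)
    (e : ℕ) (q : ℕ → Polynomial C)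
    (e' : ℕ) (t : ℕ → Polynomial C)
    (ht : ∀ i ≤ e', (t i).natDegree ≤ p.natDegree - (PP s).natDegree - 1)
    (hzero : opK1 D (fun i => embK1 (q i)) e +
      opK1 D (fun i => embK1 (t i)) e' ∘ₗ mulK1 (embK1 p)⁻¹ ∘ₗ
        opK1 D (fun i => embK1 (PP i)) s = 0) :
    (∀ i ≤ e, q i = 0) ∧ (∀ i ≤ e', t i = 0) := by
  have e0 : embK1 (0 : Polynomial C) = 0 := map_zero _
  have hpK : embK1 p ≠ 0 := fun h => hp (embK1_injective (h.trans e0.symm))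
  have coeff_opK1 : ∀ {N : ℕ} {φ : Module.End C (K1 C) →ₗ[K1 C] K1 C},
      (∀ i, φ (D ^ i) = if i = N then 1 else 0) →
      φ (opK1 D (fun i => embK1 (q i)) e) = embK1 (if N ≤ e then q N else 0) := by
    intro N φ hφ
    rw [opK1_eq_sum_smul, map_sum]
    simp [hφ, apply_ite embK1, e0]
  set R : Module.End C (K1 C) := (embK1 p)⁻¹ • opK1 D (fun i => embK1 (PP i)) s with hR
  set c : K1 C := (embK1 p)⁻¹ * embK1 (PP s) with hc
  have hRord : R - c • D ^ s ∈ operatorsOfOrderLT D s := by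
    have h := Submodule.smul_mem _ (embK1 p)⁻¹
      (opK1_sub_mem_operatorsOfOrderLT D (fun i => embK1 (PP i)) s)
    rwa [smul_sub, smul_smul] at h
  have hzero' : opK1 D (fun i => embK1 (q i)) e +
      ∑ i ∈ Finset.range (e' + 1), embK1 (t i) • (D ^ i * R) = 0 := by
    rw [← hzero]
    congr 1
    change _ = opK1 D (fun i => embK1 (t i)) e' * R
    rw [opK1_eq_sum_smul, Finset.sum_mul]
    rfl
  have htz : ∀ i ≤ e', t i = 0 := by
    by_contra! hne
    obtain ⟨i₀, hi₀, hti₀⟩ := hne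
    classical
    obtain ⟨m, hm, hmax⟩ := Finset.exists_max_image
      ((Finset.range (e' + 1)).filter (fun i => t i ≠ 0)) id
      ⟨i₀, by simp [hti₀]; omega⟩
    simp only [Finset.mem_filter, Finset.mem_range, id, and_imp] at hm hmax
    obtain ⟨φ, hφ⟩ := exists_coeff_functional D hDext (s + m)
    have h := congrArg φ hzero'
    rw [map_add, coeff_opK1 hφ, map_sum, map_zero,
      Finset.sum_eq_single_of_mem m (Finset.mem_range.mpr hm.1)] at h
    · have hlead : φ (D ^ m * R) = c := by
        have h1 := map_eq_zero_of_mem_operatorsOfOrderLT hφ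
          (pow_mul_sub_mem_operatorsOfOrderLT hLeib hRord m)
        rw [map_sub, map_smul, hφ, sub_eq_zero] at h1
        simpa using h1
      rw [map_smul, hlead, smul_eq_mul, hc] at h
      generalize (if s + m ≤ e then q (s + m) else 0) = r at h
      have h2 : embK1 (t m * PP s) = embK1 (p * -r) := by
        have h3 : embK1 (p * -r) = embK1 p * -embK1 r := by simp [embK1]
        have h4 : embK1 (t m * PP s) = embK1 (t m) * embK1 (PP s) := by simp [embK1]
        rw [h3, h4]
        field_simp at h
        linear_combination h
      have h5 := embK1_injective h2
      have hprod : t m * PP s ≠ 0 := mul_ne_zero hm.2 hPPs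
      have hdvd := Polynomial.natDegree_le_of_dvd ⟨-r, h5⟩ hprod
      rw [Polynomial.natDegree_mul hm.2 hPPs] at hdvd
      have := ht m (by omega)
      omega
    · intro i hi him
      by_cases hti : t i = 0
      · rw [hti, e0, zero_smul, map_zero]
      · have hlt : i < m := lt_of_le_of_ne (hmax i (Finset.mem_range.mp hi) hti) him
        have h1 : D ^ i * R ∈ operatorsOfOrderLT D (s + i + 1) := by
          have h2 := add_mem
            (operatorsOfOrderLT_mono D (s + i).le_succ
              (pow_mul_sub_mem_operatorsOfOrderLT hLeib hRord i))
            (Submodule.smul_mem _ c (pow_mem_operatorsOfOrderLT D (s + i).lt_succ_self))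
          rwa [sub_add_cancel] at h2
        rw [map_smul, map_eq_zero_of_mem_operatorsOfOrderLT hφ
          (operatorsOfOrderLT_mono D (by omega) h1), smul_zero]
  refine ⟨fun i hi => ?_, htz⟩
  obtain ⟨φ, hφ⟩ := exists_coeff_functional D hDext i
  have h := congrArg φ hzero'
  rw [Finset.sum_eq_zero (fun j hj => by
    rw [htz j (Nat.lt_succ_iff.mp (Finset.mem_range.mp hj)), e0, zero_smul]), add_zero,
    coeff_opK1 hφ, if_pos hi, map_zero] at h
  exact embK1_injective (h.trans e0.symm)

end
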